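/- arXiv:2304.12268 — 3 statements merged into one kernel-verified Lean document; each statement's English description precedes it below -/
import Mathlib

section
/- Let N be a finite set of players with a distinguished platform player w_p ∈ N, and let S be a finite index set of sessions, where session s is an owner map P_s : {0,1,…,n_s} → N (n_s ≥ 1) with P_s(0) = w_p and P_s(k) ≠ w_p for 1 ≤ k ≤ n_s, together with revenues r_s : {1,…,n_s} → ℝ satisfying r_s(k) ≥ 0 for all k. Then the multi-session game Ṽ under Assumptions 1 and 3 is convex (supermodular): for every player i ∈ N and all coalitions F ⊆ G ⊆ N∖{i}, Ṽ(F∪{i}) − Ṽ(F) ≤ Ṽ(G∪{i}) − Ṽ(G). -/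
open Finset

/-!
A session game is a nonnegative combination of unanimity games: `F` earns `r k` exactly when it
contains the coalition `{P 0, P k}`. In any lattice the indicator of a principal upper set
`{a | t ≤ a}` is supermodular because this set is upward closed and closed under infima, and
supermodularity passes to sums. The coalitions `insert i F` and `G` have intersection `F` and union
`insert i G`, so that supermodularity makes marginal contributions monotone.
-/

/-- A supermodular function on a lattice. On the lattice of coalitions this is convexity of a
cooperative game, in the lattice form that involves no subtraction. -/
def Supermodular {α β : Type*} [Lattice α] [Add β] [LE β] (f : α → β) : Prop :=
  ∀ a b, f a + f b ≤ f (a ⊓ b) + f (a ⊔ b)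

/-- The game `ṽ` of a single session with events `0, …, n`, owner map `P` and revenues `r`.
Only the values of `P` on `{0, …, n}` and of `r` on `{1, …, n}` are relevant. -/
def sessionGame {N R : Type*} [DecidableEq N] [AddCommMonoid R] (n : ℕ) (P : ℕ → N) (r : ℕ → R)
    (F : Finset N) : R :=
  ∑ k ∈ Icc 1 n, if {P 0, P k} ⊆ F then r k else 0

theorem supermodular_ite_le {α R : Type*} [Lattice α] [AddZeroClass R] [Preorder R] (t : α)
    [DecidablePred (t ≤ ·)] {c : R} (hc : 0 ≤ c) :
    Supermodular fun a => if t ≤ a then c else 0 := by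
  intro a b
  by_cases ha : t ≤ a
  · by_cases hb : t ≤ b
    · simp only [ha, hb, le_inf ha hb, le_sup_of_le_left ha, if_true, le_refl]
    · simp only [ha, hb, le_inf_iff, and_false, le_sup_of_le_left ha, if_true, if_false,
        add_zero, zero_add, le_refl]
  · simp only [ha, le_inf_iff, false_and, if_false, zero_add]
    by_cases hb : t ≤ b
    · simp only [hb, le_sup_of_le_right hb, if_true, le_refl]
    · simp only [hb, if_false]
      exact ite_nonneg hc le_rfl

section OrderedAddCommMonoid

variable {R : Type*} [AddCommMonoid R] [Preorder R] [IsOrderedAddMonoid R]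

theorem Supermodular.sum {α ι : Type*} [Lattice α] {s : Finset ι} {f : ι → α → R}
    (hf : ∀ j ∈ s, Supermodular (f j)) : Supermodular fun a => ∑ j ∈ s, f j a := by
  intro a b
  simp only [← sum_add_distrib]
  exact sum_le_sum fun j hj => hf j hj a b

theorem supermodular_sessionGame {N : Type*} [DecidableEq N] {n : ℕ} (P : ℕ → N) {r : ℕ → R}
    (hr : ∀ k, 1 ≤ k → k ≤ n → 0 ≤ r k) : Supermodular (sessionGame n P r) :=
  Supermodular.sum fun k hk =>
    have ⟨one_le_k, k_le_n⟩ := mem_Icc.mp hk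
    supermodular_ite_le {P 0, P k} (hr k one_le_k k_le_n)

theorem multi_session_game_A13_convex_general {N ι : Type*} [DecidableEq N] (S : Finset ι)
    (ns : ι → ℕ) (P : ι → ℕ → N) (r : ι → ℕ → R)
    (hr : ∀ s ∈ S, ∀ k, 1 ≤ k → k ≤ ns s → 0 ≤ r s k) :
    Supermodular fun F => ∑ s ∈ S, sessionGame (ns s) (P s) (r s) F :=
  Supermodular.sum fun s hs => supermodular_sessionGame (P s) (hr s hs)

end OrderedAddCommMonoid

theorem Supermodular.insert_sub_le_insert_sub {N R : Type*} [DecidableEq N] [AddCommGroup R]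
    [Preorder R] [IsOrderedAddMonoid R] {f : Finset N → R} (hf : Supermodular f)
    {F G : Finset N} {i : N} (hFG : F ⊆ G) (hi : i ∉ G) :
    f (insert i F) - f F ≤ f (insert i G) - f G := by
  have inter_eq : insert i F ∩ G = F := by
    rw [insert_inter_of_notMem hi, inter_eq_left.mpr hFG]
  have union_eq : insert i F ∪ G = insert i G := by
    rw [insert_union, union_eq_right.mpr hFG]
  rw [sub_le_sub_iff]
  calc f (insert i F) + f G ≤ f (insert i F ∩ G) + f (insert i F ∪ G) := hf _ _
    _ = f (insert i G) + f F := by rw [inter_eq, union_eq, add_comm]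

/-- The multi-session game `Ṽ` under Assumptions 1 and 3 is convex
(supermodular): for every player `i` and coalitions `F ⊆ G ⊆ N \ {i}`,
`Ṽ (F ∪ {i}) − Ṽ F ≤ Ṽ (G ∪ {i}) − Ṽ G`. -/
theorem multi_session_game_A13_convex
    {N : Type*} [Fintype N] [DecidableEq N] {ι : Type*}
    (wp : N) (S : Finset ι) (ns : ι → ℕ) (P : ι → ℕ → N) (r : ι → ℕ → ℝ)
    (hns : ∀ s ∈ S, 1 ≤ ns s)
    (hP0 : ∀ s ∈ S, P s 0 = wp)
    (hPk : ∀ s ∈ S, ∀ k, 1 ≤ k → k ≤ ns s → P s k ≠ wp)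
    (hr : ∀ s ∈ S, ∀ k, 1 ≤ k → k ≤ ns s → 0 ≤ r s k)
    (Vt : Finset N → ℝ)
    (hVt : ∀ F : Finset N, Vt F = ∑ s ∈ S, ∑ k ∈ Finset.Icc 1 (ns s),
      if ({P s 0, P s k} : Finset N) ⊆ F then r s k else 0)
    (i : N) (F G : Finset N) (hFG : F ⊆ G) (hiG : i ∉ G) :
    Vt (insert i F) - Vt F ≤ Vt (insert i G) - Vt G := by
  obtain rfl : Vt = fun F => ∑ s ∈ S, sessionGame (ns s) (P s) (r s) F := funext hVt
  exact (multi_session_game_A13_convex_general S ns P r hr).insert_sub_le_insert_sub hFG hiG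
end

section
/- Let N be a finite set of players with a distinguished platform player w_p ∈ N, and let a session be given by an owner map P : {0,1,…,n} → N (n ≥ 1) with P(0) = w_p and P(k) ≠ w_p for 1 ≤ k ≤ n, and revenues r : {1,…,n} → ℝ. Let v be the single-session game under Assumptions 1 and 2. Then for every player i ∈ N, the Shapley value of i in v equals Sh_i(v) = Σ_{k=1}^{n} ([i ∈ P(E^k)] / n^p_k) · r(k), where [i ∈ P(E^k)] is 1 if i ∈ P(E^k) and 0 otherwise. -/
open Finset

/-!
The game is a linear combination of unanimity games, one for each event, and the Shapley value is
linear in the game, so it suffices to treat the unanimity game of a coalition `S`. A player outside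
`S` never contributes. A player `i ∈ S` contributes `1` exactly when joining a coalition `F` with
`S \ {i} ⊆ F ⊆ N \ {i}`; grouping these `F` by cardinality, the hockey-stick identity evaluates the
total Shapley weight of the interval to `1 / |S|`.
-/

section ShapleyWeight

open scoped Nat

theorem succ_mul_sum_choose_mul_factorial_mul_factorial (a b : ℕ) :
    (a + 1) * ∑ j ∈ range (b + 1), b.choose j * ((a + j)! * (b - j)!) = (a + b + 1)! := by
  have term_eq : ∀ j ∈ range (b + 1),
      b.choose j * ((a + j)! * (b - j)!) = a ! * b ! * (j + a).choose a := by
    intro j hj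
    rw [← Nat.choose_mul_factorial_mul_factorial (mem_range_succ_iff.mp hj), add_comm a j,
      ← Nat.add_choose_mul_factorial_mul_factorial j a]
    ring
  calc (a + 1) * ∑ j ∈ range (b + 1), b.choose j * ((a + j)! * (b - j)!)
      = (a + 1) * (a ! * b ! * (b + a + 1).choose (a + 1)) := by
        rw [sum_congr rfl term_eq, ← mul_sum, Nat.sum_range_add_choose]
    _ = (b + (a + 1)).choose (a + 1) * b ! * (a + 1)! := by
        rw [Nat.factorial_succ, add_assoc]
        ring
    _ = (a + b + 1)! := by
        rw [Nat.add_choose_mul_factorial_mul_factorial, add_comm a b, add_assoc]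

/-- The weight `m! (n - m - 1)! / n!` of a coalition of size `m` in the Shapley value of a game with
`n` players: the probability that, in a uniformly random order of the players, a given player is
preceded exactly by a given coalition of size `m`. It is only meaningful for `m < n`, since the
subtraction is truncated, and when `n!` is nonzero in `𝕜`. -/
def shapleyWeight (𝕜 : Type*) [Semifield 𝕜] (n m : ℕ) : 𝕜 :=
  (m ! * (n - m - 1)! : 𝕜) / n !

theorem sum_choose_mul_shapleyWeight (𝕜 : Type*) [Semifield 𝕜] [CharZero 𝕜] (a b : ℕ) :
    ∑ j ∈ range (b + 1), (b.choose j : 𝕜) * shapleyWeight 𝕜 (a + b + 1) (a + j) =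
      1 / ((a + 1 : ℕ) : 𝕜) := by
  have term_eq (j : ℕ) : (b.choose j : 𝕜) * shapleyWeight 𝕜 (a + b + 1) (a + j) =
      (b.choose j * ((a + j)! * (b - j)!) : ℕ) / (a + b + 1)! := by
    rw [shapleyWeight, show a + b + 1 - (a + j) - 1 = b - j by lia]
    push_cast
    ring
  rw [sum_congr rfl fun j _ ↦ term_eq j, ← sum_div, ← Nat.cast_sum,
    div_eq_div_iff (Nat.cast_ne_zero.mpr (Nat.factorial_ne_zero _))
      (Nat.cast_ne_zero.mpr a.succ_ne_zero), one_mul,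
    ← succ_mul_sum_choose_mul_factorial_mul_factorial]
  push_cast
  ring

end ShapleyWeight

theorem sum_Icc_finset_apply_card {α M : Type*} [DecidableEq α] [AddCommMonoid M]
    {s t : Finset α} (hst : s ⊆ t) (f : ℕ → M) :
    ∑ u ∈ Icc s t, f #u = ∑ j ∈ range (#(t \ s) + 1), (#(t \ s)).choose j • f (#s + j) := by
  have disjoint_of_mem {u : Finset α} (hu : u ∈ (t \ s).powerset) : Disjoint s u :=
    disjoint_sdiff.mono_right (mem_powerset.mp hu)
  have injOn_union : Set.InjOn (s ∪ ·) (t \ s).powerset := fun u hu w hw h ↦ by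
    rw [← (disjoint_of_mem hu).sup_sdiff_cancel_left, ← (disjoint_of_mem hw).sup_sdiff_cancel_left]
    exact congrArg (· \ s) h
  rw [Icc_eq_image_powerset hst, sum_image injOn_union,
    ← sum_powerset_apply_card fun j ↦ f (#s + j)]
  exact sum_congr rfl fun u hu ↦ by rw [card_union_of_disjoint (disjoint_of_mem hu)]

section ShapleyValue

variable {N 𝕜 : Type*} [Fintype N] [DecidableEq N] [Field 𝕜]

/-- The Shapley value of player `i`, as a linear functional on the games with player set `N`. A game
is an arbitrary function on coalitions; no value at `∅` is prescribed. -/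
def shapleyValue (i : N) : (Finset N → 𝕜) →ₗ[𝕜] 𝕜 where
  toFun v := ∑ F ∈ (univ.erase i).powerset,
    shapleyWeight 𝕜 (Fintype.card N) #F * (v (insert i F) - v F)
  map_add' v w := by
    simp only [Pi.add_apply, add_sub_add_comm, mul_add, sum_add_distrib]
  map_smul' c v := by
    simp only [Pi.smul_apply, ← smul_sub, mul_smul_comm, smul_sum, RingHom.id_apply]

theorem shapleyValue_apply (i : N) (v : Finset N → 𝕜) :
    shapleyValue i v = ∑ F ∈ (univ.erase i).powerset,
      shapleyWeight 𝕜 (Fintype.card N) #F * (v (insert i F) - v F) :=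
  rfl

/-- The unanimity game of the coalition `S`; the session game is a linear combination of these. -/
def unanimityGame (𝕜 : Type*) [Zero 𝕜] [One 𝕜] {N : Type*} [DecidableEq N] (S F : Finset N) : 𝕜 :=
  if S ⊆ F then 1 else 0

theorem shapleyValue_unanimityGame_of_notMem {S : Finset N} {i : N} (hi : i ∉ S) :
    shapleyValue i (unanimityGame 𝕜 S) = 0 := by
  rw [shapleyValue_apply]
  refine sum_eq_zero fun F _ ↦ ?_
  simp only [unanimityGame, subset_insert_iff_of_notMem hi, sub_self, mul_zero]

theorem shapleyValue_unanimityGame_of_mem_eq_sum_Icc {S : Finset N} {i : N} (hi : i ∈ S) :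
    shapleyValue i (unanimityGame 𝕜 S) =
      ∑ F ∈ Icc (S.erase i) (univ.erase i), shapleyWeight 𝕜 (Fintype.card N) #F := by
  rw [shapleyValue_apply, Icc_eq_filter_powerset, sum_filter]
  refine sum_congr rfl fun F hF ↦ ?_
  have hiF : i ∉ F := fun h ↦ notMem_erase i univ (mem_powerset.mp hF h)
  have not_subset : ¬S ⊆ F := fun h ↦ hiF (h hi)
  simp only [unanimityGame, subset_insert_iff, if_neg not_subset, sub_zero, mul_ite, mul_one,
    mul_zero]

variable [CharZero 𝕜]

theorem shapleyValue_unanimityGame_of_mem {S : Finset N} {i : N} (hi : i ∈ S) :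
    shapleyValue i (unanimityGame 𝕜 S) = 1 / (#S : 𝕜) := by
  have hsub : S.erase i ⊆ univ.erase i := erase_subset_erase i (subset_univ S)
  have hS : #(S.erase i) + 1 = #S := card_erase_add_one hi
  have hN : Fintype.card N = #(S.erase i) + #(univ.erase i \ S.erase i) + 1 := by
    rw [add_comm #(S.erase i), card_sdiff_add_card_eq_card hsub, card_erase_add_one (mem_univ i),
      card_univ]
  rw [shapleyValue_unanimityGame_of_mem_eq_sum_Icc hi, sum_Icc_finset_apply_card hsub, hN, ← hS]
  simpa only [nsmul_eq_mul] using sum_choose_mul_shapleyWeight 𝕜 _ _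

theorem shapleyValue_unanimityGame (S : Finset N) (i : N) :
    shapleyValue i (unanimityGame 𝕜 S) = if i ∈ S then 1 / (#S : 𝕜) else 0 := by
  split_ifs with hi
  · exact shapleyValue_unanimityGame_of_mem hi
  · exact shapleyValue_unanimityGame_of_notMem hi

theorem shapley_value_single_session_A12_general {ι : Type*} (s : Finset ι) (S : ι → Finset N)
    (r : ι → 𝕜) (i : N) :
    shapleyValue i (fun F ↦ ∑ k ∈ s, if S k ⊆ F then r k else 0) =
      ∑ k ∈ s with i ∈ S k, r k / #(S k) := by
  have game_eq : (fun F ↦ ∑ k ∈ s, if S k ⊆ F then r k else 0) =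
      ∑ k ∈ s, r k • unanimityGame 𝕜 (S k) := by
    ext F
    simp [unanimityGame]
  simp only [game_eq, map_sum, map_smul, shapleyValue_unanimityGame, smul_eq_mul, mul_ite, mul_zero,
    mul_one_div, sum_filter]

end ShapleyValue

/-- For the single-session game `v` under Assumptions 1 and 2, the
Shapley value of player `i` equals
`Σ_{k=1}^{n} ([i ∈ P(E^k)] / n^p_k) · r(k)`. -/
theorem shapley_value_single_session_A12
    {N : Type*} [Fintype N] [DecidableEq N]
    (wp : N) (n : ℕ) (hn : 1 ≤ n) (P : ℕ → N) (r : ℕ → ℝ)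
    (hP0 : P 0 = wp)
    (hPk : ∀ k, 1 ≤ k → k ≤ n → P k ≠ wp)
    (v : Finset N → ℝ)
    (hv : ∀ F : Finset N, v F = ∑ k ∈ Finset.Icc 1 n,
      if (Finset.range (k + 1)).image P ⊆ F then r k else 0)
    (i : N) :
    (∑ F ∈ (Finset.univ.erase i).powerset,
        ((F.card.factorial * (Fintype.card N - F.card - 1).factorial : ℝ) /
          (Fintype.card N).factorial) * (v (insert i F) - v F))
      = ∑ k ∈ Finset.Icc 1 n,
          (if i ∈ (Finset.range (k + 1)).image P then (1 : ℝ) else 0) /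
            (((Finset.range (k + 1)).image P).card : ℝ) * r k := by
  refine (shapleyValue_apply i v).symm.trans ?_
  rw [funext hv, shapley_value_single_session_A12_general, sum_filter]
  simp only [ite_div, zero_div, ite_mul, zero_mul, one_div_mul_eq_div]
end

section
/- Let N be a finite set of players with a distinguished platform player w_p ∈ N, and let a session be given by an owner map P : {0,1,…,n} → N (n ≥ 1) with P(0) = w_p and P(k) ≠ w_p for 1 ≤ k ≤ n, and revenues r : {1,…,n} → ℝ. If α is the attenuation function with α(0) = 1 and α(m) = 0 for all m ≥ 1 (the exponential attenuation with θ = 0, using the convention 0⁰ = 1), then the α-Shapley rule coincides with the Shapley value of the game under Assumptions 1 and 3: ES^α_i = Σ_{k=1}^{n} ([i ∈ {P(0),P(k)}] / 2) · r(k) for every player i ∈ N. -/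
open Finset

/-! With `θ = 0` the attenuation function is the Kronecker delta at `0`, so the attribution of event
`k` sees no event other than `k` itself. Every weight then has denominator `2`, and its numerator
counts the platform `P 0` and the owner `P k` once each. -/

/-- The weight `w_i(k)` with which player `i` shares in the revenue of event `k` under the
attenuation function `α`. The platform player is encoded as the owner `P 0` of event `0`. -/
def alphaShapleyWeight {N K : Type*} [DecidableEq N] [DivisionSemiring K]
    (α : ℕ → K) (P : ℕ → N) (i : N) (k : ℕ) : K :=
  ((if i = P 0 then 1 else 0) + ∑ l ∈ Icc 1 k with P l = i, α (k - l)) /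
    (1 + ∑ j ∈ Icc 1 k, α (k - j))

/-- The `α`-Shapley share `ES^α_i` of player `i` in a session with events `0, …, n`. Both the owner
map `P` and the revenues `r` are total functions on `ℕ`, whose values outside the session are
ignored. -/
def alphaShapleyShare {N K : Type*} [DecidableEq N] [DivisionSemiring K]
    (α : ℕ → K) (P : ℕ → N) (r : ℕ → K) (n : ℕ) (i : N) : K :=
  ∑ k ∈ Icc 1 n, alphaShapleyWeight α P i k * r k

theorem sum_apply_sub_eq_ite_mem {M : Type*} [AddCommMonoid M] {α : ℕ → M}
    (hα : ∀ m, 1 ≤ m → α m = 0) {s : Finset ℕ} {k : ℕ} (hs : ∀ l ∈ s, l ≤ k) :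
    ∑ l ∈ s, α (k - l) = if k ∈ s then α 0 else 0 := by
  have apply_sub : ∀ l ∈ s, α (k - l) = if k = l then α 0 else 0 := by
    intro l hl
    obtain rfl | hlk := (hs l hl).eq_or_lt
    · rw [if_pos rfl, Nat.sub_self]
    · rw [if_neg hlk.ne', hα _ (Nat.sub_pos_of_lt hlk)]
  rw [sum_congr rfl apply_sub, sum_ite_eq]

theorem ite_eq_add_ite_eq_of_ne {N R : Type*} [DecidableEq N] [AddZeroClass R] [One R]
    {a b : N} (hab : a ≠ b) (i : N) :
    (if i = a then (1 : R) else 0) + (if i = b then 1 else 0) =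
      if i ∈ ({a, b} : Finset N) then 1 else 0 := by
  by_cases hi : i = a
  · subst hi
    simp [hab]
  · simp [hi]

section Attenuation

variable {N K : Type*} [DecidableEq N] [DivisionSemiring K] {α : ℕ → K}

theorem alphaShapleyWeight_of_attenuation_eq_zero (hα₀ : α 0 = 1) (hα : ∀ m, 1 ≤ m → α m = 0)
    (P : ℕ → N) (i : N) {k : ℕ} (hk : 1 ≤ k) :
    alphaShapleyWeight α P i k =
      ((if i = P 0 then 1 else 0) + (if i = P k then 1 else 0)) / 2 := by
  have total : ∑ j ∈ Icc 1 k, α (k - j) = 1 := by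
    rw [sum_apply_sub_eq_ite_mem hα fun j hj => (mem_Icc.1 hj).2,
      if_pos (right_mem_Icc.2 hk), hα₀]
  have owned : ∑ l ∈ Icc 1 k with P l = i, α (k - l) = if i = P k then 1 else 0 := by
    rw [sum_apply_sub_eq_ite_mem hα fun l hl => (mem_Icc.1 (mem_filter.1 hl).1).2, hα₀]
    simp only [mem_filter, right_mem_Icc, hk, true_and, eq_comm]
  rw [alphaShapleyWeight, total, owned, one_add_one_eq_two]

theorem alpha_shapley_theta_zero_eq_shapley_A13_general [NeZero (2 : K)]
    (hα₀ : α 0 = 1) (hα : ∀ m, 1 ≤ m → α m = 0) {P : ℕ → N} {n : ℕ}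
    (hP : ∀ k, 1 ≤ k → k ≤ n → P k ≠ P 0) (r : ℕ → K) (i : N) :
    alphaShapleyShare α P r n i =
      ∑ k ∈ Icc 1 n, (if i ∈ ({P 0, P k} : Finset N) then 1 else 0) / 2 * r k := by
  refine sum_congr rfl fun k hk => ?_
  obtain ⟨one_le_k, k_le_n⟩ := mem_Icc.1 hk
  rw [alphaShapleyWeight_of_attenuation_eq_zero hα₀ hα P i one_le_k,
    ite_eq_add_ite_eq_of_ne (hP k one_le_k k_le_n).symm i]

end Attenuation

/-- If `α(0) = 1` and `α(m) = 0` for all `m ≥ 1` (exponential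
attenuation with `θ = 0`), the `α`-Shapley rule coincides with the Shapley value
of the game under Assumptions 1 and 3:
`ES^α_i = Σ_{k=1}^{n} ([i ∈ {P(0),P(k)}] / 2) · r(k)`. -/
theorem alpha_shapley_theta_zero_eq_shapley_A13
    {N : Type*} [Fintype N] [DecidableEq N]
    (wp : N) (n : ℕ) (hn : 1 ≤ n) (P : ℕ → N) (r : ℕ → ℝ)
    (hP0 : P 0 = wp)
    (hPk : ∀ k, 1 ≤ k → k ≤ n → P k ≠ wp)
    (α : ℕ → ℝ) (hα0 : α 0 = 1) (hα1 : ∀ m : ℕ, 1 ≤ m → α m = 0)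
    (ESα : N → ℝ)
    (hESα : ∀ i : N, ESα i = ∑ k ∈ Finset.Icc 1 n,
      (((if i = wp then (1 : ℝ) else 0) +
          ∑ l ∈ (Finset.Icc 1 k).filter (fun l => P l = i), α (k - l)) /
        (1 + ∑ j ∈ Finset.Icc 1 k, α (k - j))) * r k)
    (i : N) :
    ESα i = ∑ k ∈ Finset.Icc 1 n,
      (if i ∈ ({P 0, P k} : Finset N) then (1 : ℝ) else 0) / 2 * r k := by
  subst hP0
  exact (hESα i).trans (alpha_shapley_theta_zero_eq_shapley_A13_general hα0 hα1 hPk r i)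
end
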